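/- Let N be a positive integer with N ≥ (γ²/(4ε²))·(∑_x √(q_x) + √(8·log(2/δ)))² for given ε > 0 and δ ∈ (0,1). Then the signed empirical estimator p̃ built from N i.i.d. samples satisfies P( (1/2)·∑_x |p_x − p̃_x| ≤ ε ) ≥ 1 − δ. (Proposition 1: sampling cost of the probability-estimation-based weak distillation.) -/

import Mathlib

open MeasureTheory Finset

namespace WD

def W {α : Type*} (w : α → ℝ) {n : ℕ} (ω : Fin n → α) : ℝ := ∏ i, w (ω i)

def E {α : Type*} [Fintype α] (w : α → ℝ) {n : ℕ} (g : (Fin n → α) → ℝ) : ℝ :=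
  ∑ ω, W w ω * g ω

lemma sum_cons {α : Type*} [Fintype α] {n : ℕ} (F : (Fin (n + 1) → α) → ℝ) :
    ∑ ω, F ω = ∑ a, ∑ ω : Fin n → α, F (Fin.cons a ω) := by
  rw [← (Fin.consEquiv (fun _ : Fin (n + 1) => α)).sum_comp, Fintype.sum_prod_type]
  rfl

lemma W_cons {α : Type*} (w : α → ℝ) {n : ℕ} (a : α) (ω : Fin n → α) :
    W w (Fin.cons a ω : Fin (n + 1) → α) = w a * W w ω := by
  simp [W, Fin.prod_univ_succ]

lemma E_cons {α : Type*} [Fintype α] (w : α → ℝ) {n : ℕ} (g : (Fin (n + 1) → α) → ℝ) :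
    E w g = ∑ a, w a * E w (fun ω : Fin n → α => g (Fin.cons a ω)) := by
  unfold E
  rw [sum_cons]
  refine sum_congr rfl fun a _ => ?_
  rw [mul_sum]
  refine sum_congr rfl fun ω _ => ?_
  rw [W_cons]; ring

lemma W_nonneg {α : Type*} (w : α → ℝ) (hw : ∀ a, 0 ≤ w a) {n : ℕ} (ω : Fin n → α) :
    0 ≤ W w ω := prod_nonneg fun _ _ => hw _

lemma E_mono {α : Type*} [Fintype α] (w : α → ℝ) (hw : ∀ a, 0 ≤ w a) {n : ℕ}
    {g h : (Fin n → α) → ℝ} (H : ∀ ω, g ω ≤ h ω) : E w g ≤ E w h :=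
  sum_le_sum fun ω _ => mul_le_mul_of_nonneg_left (H ω) (W_nonneg w hw ω)

lemma E_mul {α : Type*} [Fintype α] (w : α → ℝ) {n : ℕ} (c : ℝ) (g : (Fin n → α) → ℝ) :
    E w (fun ω => c * g ω) = c * E w g := by
  unfold E; rw [mul_sum]; exact sum_congr rfl fun ω _ => by ring

lemma E_add {α : Type*} [Fintype α] (w : α → ℝ) {n : ℕ} (g h : (Fin n → α) → ℝ) :
    E w (fun ω => g ω + h ω) = E w g + E w h := by
  unfold E; rw [← sum_add_distrib]; exact sum_congr rfl fun ω _ => by ring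

lemma E_const {α : Type*} [Fintype α] (w : α → ℝ) (h1 : ∑ a, w a = 1) {n : ℕ} (c : ℝ) :
    E w (fun _ : Fin n → α => c) = c := by
  induction n with
  | zero => simp [E, W]
  | succ n ih => rw [E_cons]; simp [ih, ← sum_mul, h1]

lemma E_sum {α κ : Type*} [Fintype α] [Fintype κ] (w : α → ℝ) {n : ℕ}
    (g : κ → (Fin n → α) → ℝ) :
    E w (fun ω => ∑ x, g x ω) = ∑ x, E w (g x) := by
  unfold E; rw [sum_comm]; exact sum_congr rfl fun ω _ => by rw [mul_sum]

lemma exp_bound (u a : ℝ) (hu : |u| ≤ 1) :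
    Real.exp (u * a) ≤ Real.cosh a + u * Real.sinh a := by
  have h := abs_le.1 hu
  have := convexOn_exp.2 (Set.mem_univ a) (Set.mem_univ (-a))
    (show 0 ≤ (1 + u) / 2 by linarith) (show 0 ≤ (1 - u) / 2 by linarith) (by ring)
  simp only [smul_eq_mul] at this
  rw [Real.cosh_eq, Real.sinh_eq]
  calc Real.exp (u * a) = Real.exp ((1 + u) / 2 * a + (1 - u) / 2 * -a) := by congr 1; ring
    _ ≤ _ := this
    _ = _ := by ring

lemma hoeff {α : Type*} [Fintype α] (w : α → ℝ) (hw : ∀ a, 0 ≤ w a) (h1 : ∑ a, w a = 1)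
    (h : α → ℝ) (c s : ℝ) (hc : 0 < c) (hd : ∀ a b, |h a - h b| ≤ c) :
    ∑ a, w a * Real.exp (s * (h a - ∑ b, w b * h b)) ≤ Real.exp (s ^ 2 * c ^ 2 / 2) := by
  set m := ∑ b, w b * h b with hm
  have hY : ∀ a, |h a - m| ≤ c := by
    intro a
    have : h a - m = ∑ b, w b * (h a - h b) := by
      simp only [mul_sub, sum_sub_distrib, ← sum_mul, h1, one_mul, hm]
    rw [this]
    calc _ ≤ ∑ b, |w b * (h a - h b)| := abs_sum_le_sum_abs _ _
      _ ≤ ∑ b, w b * c := sum_le_sum fun b _ => by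
        rw [abs_mul, abs_of_nonneg (hw b)]; exact mul_le_mul_of_nonneg_left (hd a b) (hw b)
      _ = c := by rw [← sum_mul, h1, one_mul]
  calc ∑ a, w a * Real.exp (s * (h a - m))
      ≤ ∑ a, w a * (Real.cosh (s * c) + (h a - m) / c * Real.sinh (s * c)) := by
        refine sum_le_sum fun a _ => mul_le_mul_of_nonneg_left ?_ (hw a)
        have := exp_bound ((h a - m) / c) (s * c) (by
          rw [abs_div, abs_of_pos hc, div_le_one hc]; exact hY a)
        refine le_trans (le_of_eq ?_) this
        congr 1; field_simp
    _ = ∑ a, (w a * Real.cosh (s * c) + (w a * h a - w a * m) * (Real.sinh (s * c) / c)) :=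
        sum_congr rfl fun a _ => by ring
    _ = Real.cosh (s * c) := by
        rw [sum_add_distrib, ← sum_mul, ← sum_mul, sum_sub_distrib, ← sum_mul, h1, ← hm]; ring
    _ ≤ Real.exp ((s * c) ^ 2 / 2) := Real.cosh_le_exp_half_sq _
    _ = _ := by congr 1; ring

lemma mcd {α : Type*} [Fintype α] (w : α → ℝ) (hw : ∀ a, 0 ≤ w a) (h1 : ∑ a, w a = 1)
    (c s : ℝ) (hc : 0 < c) {n : ℕ} (g : (Fin n → α) → ℝ)
    (hd : ∀ ω i a, |g (Function.update ω i a) - g ω| ≤ c) :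
    E w (fun ω => Real.exp (s * (g ω - E w g))) ≤ Real.exp (n * (s ^ 2 * c ^ 2 / 2)) := by
  induction n with
  | zero => simp [E, W]
  | succ n ih =>
    set h : α → ℝ := fun a => E w (fun ω : Fin n → α => g (Fin.cons a ω)) with hh
    have hEg : E w g = ∑ a, w a * h a := E_cons w g
    have hcons : ∀ a, E w (fun ω : Fin n → α => Real.exp (s * (g (Fin.cons a ω) - h a)))
        ≤ Real.exp (n * (s ^ 2 * c ^ 2 / 2)) := by
      intro a
      refine ih _ fun ω i b => ?_
      rw [Fin.cons_update]; exact hd _ _ _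
    have hhd : ∀ a b, h a ≤ h b + c := by
      intro a b
      have : h b + c = E w (fun ω : Fin n → α => g (Fin.cons b ω) + c) := by
        rw [E_add, E_const w h1]
      rw [this]
      refine E_mono w hw fun ω => ?_
      have := hd (Fin.cons b ω) 0 a
      rw [Fin.update_cons_zero] at this
      linarith [(abs_le.1 this).2]
    rw [E_cons]
    calc _ = ∑ a, w a * (Real.exp (s * (h a - E w g)) *
          E w (fun ω : Fin n → α => Real.exp (s * (g (Fin.cons a ω) - h a)))) := by
          refine sum_congr rfl fun a _ => ?_
          congr 1
          rw [← E_mul]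
          congr 1
          funext ω
          rw [← Real.exp_add]; congr 1; ring
      _ ≤ ∑ a, w a * (Real.exp (s * (h a - E w g)) * Real.exp (n * (s ^ 2 * c ^ 2 / 2))) :=
          sum_le_sum fun a _ => mul_le_mul_of_nonneg_left
            (mul_le_mul_of_nonneg_left (hcons a) (Real.exp_pos _).le) (hw a)
      _ = (∑ a, w a * Real.exp (s * (h a - ∑ b, w b * h b)))
            * Real.exp (n * (s ^ 2 * c ^ 2 / 2)) := by
          rw [sum_mul, hEg]; exact sum_congr rfl fun a _ => by ring
      _ ≤ Real.exp (s ^ 2 * c ^ 2 / 2) * Real.exp (n * (s ^ 2 * c ^ 2 / 2)) :=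
          mul_le_mul_of_nonneg_right (hoeff w hw h1 h c s hc fun a b => by
            rw [abs_le]; constructor <;> linarith [hhd a b, hhd b a]) (Real.exp_pos _).le
      _ = _ := by rw [← Real.exp_add]; congr 1; push_cast; ring

lemma E_linear {α : Type*} [Fintype α] (w : α → ℝ) (h1 : ∑ a, w a = 1)
    (Y : α → ℝ) (hY : ∑ a, w a * Y a = 0) {n : ℕ} :
    E w (fun ω : Fin n → α => (∑ i, Y (ω i)) ^ 2) = n * ∑ a, w a * Y a ^ 2 := by
  induction n with
  | zero => simp [E]
  | succ n ih =>
    rw [E_cons]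
    have : ∀ a, E w (fun ω : Fin n → α =>
        (∑ i, Y ((Fin.cons a ω : Fin (n + 1) → α) i)) ^ 2)
        = Y a ^ 2 + 2 * Y a * E w (fun ω : Fin n → α => ∑ i, Y (ω i))
          + n * ∑ a, w a * Y a ^ 2 := by
      intro a
      rw [← ih, ← E_mul, ← E_const w h1 (n := n) (Y a ^ 2), ← E_add, ← E_add]
      congr 1; funext ω
      simp only [Fin.sum_univ_succ, Fin.cons_zero, Fin.cons_succ]; ring
    simp only [this]
    set K := E w (fun ω : Fin n → α => ∑ i, Y (ω i))
    set V := ∑ a, w a * Y a ^ 2 with hV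
    calc _ = ∑ a, (w a * Y a ^ 2 + w a * Y a * (2 * K) + w a * (n * V)) :=
          sum_congr rfl fun a _ => by ring
      _ = _ := by
        rw [sum_add_distrib, sum_add_distrib, ← sum_mul, ← sum_mul, hY, h1, ← hV]
        push_cast; ring

lemma E_abs {α : Type*} [Fintype α] (w : α → ℝ) (hw : ∀ a, 0 ≤ w a) (h1 : ∑ a, w a = 1)
    {n : ℕ} (g : (Fin n → α) → ℝ) : E w (fun ω => |g ω|) ≤ Real.sqrt (E w fun ω => g ω ^ 2) := by
  apply Real.le_sqrt_of_sq_le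
  set m := E w (fun ω => |g ω|) with hm
  have h0 : E w (fun ω => (0:ℝ)) ≤ E w (fun ω => (g ω ^ 2 + (-2 * m) * |g ω|) + m ^ 2) :=
    E_mono w hw fun ω => by nlinarith [sq_nonneg (|g ω| - m), sq_abs (g ω)]
  rw [E_const w h1, E_add, E_add, E_mul, E_const w h1, ← hm] at h0
  nlinarith

end WD


/-- Proposition 1: sampling cost of the probability-estimation-based weak
distillation. Given the quasi-probability decomposition `p = c₊p⁺ − c₋p⁻` with
`c₊ − c₋ = 1`, `γ = c₊ + c₋`, and the sampling model of `N` i.i.d. pairs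
`(Xᵢ, Sᵢ) ∈ ι × Bool` with `P(Xᵢ = x, Sᵢ = +1) = c₊p⁺ₓ/γ` and
`P(Xᵢ = x, Sᵢ = −1) = c₋p⁻ₓ/γ`, if
`N ≥ (γ²/(4ε²))·(∑_x √(q_x) + √(8·log(2/δ)))²`, then the signed empirical
estimator `p̃ₓ(ω) = (γ/N)·∑ᵢ Sᵢ·1[Xᵢ = x]` satisfies
`P((1/2)·∑_x |p_x − p̃_x| ≤ ε) ≥ 1 − δ`. -/
theorem estimation_based_weak_distillation_cost
    {ι : Type*} [Fintype ι] [DecidableEq ι] [MeasurableSpace ι]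
    (pp pm : ι → ℝ)
    (hpp0 : ∀ x, 0 ≤ pp x) (hpp1 : ∑ x, pp x = 1)
    (hpm0 : ∀ x, 0 ≤ pm x) (hpm1 : ∑ x, pm x = 1)
    (cp cm : ℝ) (hcp : 0 ≤ cp) (hcm : 0 ≤ cm) (hc : cp - cm = 1)
    (γ : ℝ) (hγ : γ = cp + cm)
    (p : ι → ℝ) (hp : ∀ x, p x = cp * pp x - cm * pm x)
    (hp0 : ∀ x, 0 ≤ p x)
    (q : ι → ℝ) (hq : ∀ x, q x = (cp * pp x + cm * pm x) / γ)
    (μ1 : Measure (ι × Bool)) [IsProbabilityMeasure μ1]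
    (hμt : ∀ x, μ1 {(x, true)} = ENNReal.ofReal (cp * pp x / γ))
    (hμf : ∀ x, μ1 {(x, false)} = ENNReal.ofReal (cm * pm x / γ))
    (N : ℕ) (hN : 0 < N)
    (ε δ : ℝ) (hε : 0 < ε) (hδ0 : 0 < δ) (hδ1 : δ < 1)
    (hNbound : (N : ℝ) ≥ γ ^ 2 / (4 * ε ^ 2) *
      (∑ x, Real.sqrt (q x) + Real.sqrt (8 * Real.log (2 / δ))) ^ 2) :
    ENNReal.ofReal (1 - δ) ≤
      (Measure.pi fun _ : Fin N => μ1)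
        {ω | (1 / 2) * ∑ x, |p x - (γ / N) *
            ∑ i, (if (ω i).1 = x then (if (ω i).2 then (1 : ℝ) else -1) else 0)| ≤ ε} := by
  classical
  have hγ1 : 1 ≤ γ := by linarith
  have hγ0 : 0 < γ := by linarith
  have hNR : (0:ℝ) < N := by exact_mod_cast hN
  let w : ι × Bool → ℝ := fun a => if a.2 then cp * pp a.1 / γ else cm * pm a.1 / γ
  have hw : ∀ a, 0 ≤ w a := by
    rintro ⟨x, b⟩
    have := hpp0 x
    have := hpm0 x
    cases b <;> simp only [w] <;> simp <;> positivity
  have hwμ : ∀ a, μ1 {a} = ENNReal.ofReal (w a) := by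
    rintro ⟨x, b⟩
    cases b <;> simp [w, hμt, hμf]
  have h1 : ∑ a, w a = 1 := by
    rw [Fintype.sum_prod_type]
    simp only [Fintype.sum_bool, w, sum_add_distrib]
    simp only [if_true, Bool.false_eq_true, if_false, ← sum_div, ← mul_sum, hpp1, hpm1]
    rw [hγ]; field_simp
    exact div_self (by linarith)
  let Z : ι → ι × Bool → ℝ := fun x a => if a.1 = x then (if a.2 then (1 : ℝ) else -1) else 0
  let D : ι → (Fin N → ι × Bool) → ℝ := fun x ω => p x - (γ / N) * ∑ i, Z x (ω i)
  let f : (Fin N → ι × Bool) → ℝ := fun ω => ∑ x, |D x ω|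
  have hEZ : ∀ x, ∑ a, w a * Z x a = p x / γ := by
    intro x
    rw [Fintype.sum_prod_type]
    simp only [Fintype.sum_bool, w, Z]
    simp [hp, Finset.sum_add_distrib]
    ring
  have hEZ2 : ∀ x, ∑ a, w a * Z x a ^ 2 = q x := by
    intro x
    rw [Fintype.sum_prod_type]
    simp only [Fintype.sum_bool, w, Z]
    simp [hq, Finset.sum_add_distrib, ite_pow]
    ring
  set A := ∑ x, Real.sqrt (q x) with hA
  set B := Real.sqrt (8 * Real.log (2 / δ)) with hB
  have hlog : 0 < Real.log (2 / δ) := Real.log_pos (by rw [lt_div_iff₀ hδ0]; linarith)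
  have hB2 : B ^ 2 = 8 * Real.log (2 / δ) := Real.sq_sqrt (by linarith)
  have hB0 : 0 < B := Real.sqrt_pos.2 (by linarith)
  have hA0 : 0 ≤ A := sum_nonneg fun _ _ => Real.sqrt_nonneg _
  have hsN : 0 < Real.sqrt N := Real.sqrt_pos.2 hNR
  have hsN2 : Real.sqrt N ^ 2 = N := Real.sq_sqrt hNR.le
  -- expectation
  have hED : ∀ x, WD.E w (fun ω => |D x ω|) ≤ γ / Real.sqrt N * Real.sqrt (q x) := by
    intro x
    refine (WD.E_abs w hw h1 (D x)).trans ?_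
    have hD : ∀ ω, D x ω = ∑ i, (p x - γ * Z x (ω i)) / N := by
      intro ω
      simp only [D]
      rw [← sum_div, sum_sub_distrib, ← mul_sum]
      simp
      field_simp
    have hm : ∑ a, w a * ((p x - γ * Z x a) / N) = 0 := by
      calc _ = ∑ a, (w a * p x - w a * Z x a * γ) / N := sum_congr rfl fun a _ => by ring
        _ = 0 := by
          rw [← sum_div, sum_sub_distrib, ← sum_mul, ← sum_mul, h1, hEZ]
          field_simp; simp
    have hv : ∑ a, w a * ((p x - γ * Z x a) / N) ^ 2 ≤ γ ^ 2 * q x / N ^ 2 := by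
      calc _ = ∑ a, (w a * p x ^ 2 - w a * Z x a * (2 * p x * γ) + w a * Z x a ^ 2 * γ ^ 2) / N ^ 2
            := sum_congr rfl fun a _ => by ring
        _ = (γ ^ 2 * q x - p x ^ 2) / N ^ 2 := by
          rw [← sum_div, sum_add_distrib, sum_sub_distrib, ← sum_mul, ← sum_mul, ← sum_mul, h1,
            hEZ, hEZ2]
          field_simp; ring
        _ ≤ _ := by gcongr; nlinarith [sq_nonneg (p x)]
    have hq0 : 0 ≤ q x := by
      rw [← hEZ2]; exact sum_nonneg fun a _ => mul_nonneg (hw a) (sq_nonneg _)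
    have : WD.E w (fun ω => D x ω ^ 2) ≤ (γ / Real.sqrt N * Real.sqrt (q x)) ^ 2 := by
      simp only [hD]
      rw [WD.E_linear w h1 (fun a => (p x - γ * Z x a) / N) hm, mul_pow, div_pow, hsN2,
        Real.sq_sqrt hq0]
      calc _ ≤ (N:ℝ) * (γ ^ 2 * q x / N ^ 2) := mul_le_mul_of_nonneg_left hv hNR.le
        _ = _ := by field_simp
    calc _ ≤ Real.sqrt ((γ / Real.sqrt N * Real.sqrt (q x)) ^ 2) := Real.sqrt_le_sqrt this
      _ = _ := Real.sqrt_sq (by positivity)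
  have hEf : WD.E w f ≤ γ / Real.sqrt N * A := by
    rw [hA, mul_sum]
    simp only [f]
    rw [WD.E_sum]
    exact sum_le_sum fun x _ => hED x
  -- bounded differences
  have hZs : ∀ a, ∑ x, |Z x a| = 1 := by
    rintro ⟨y, b⟩
    simp only [Z, apply_ite abs]
    cases b <;> simp
  have hfd : ∀ ω i a, |f (Function.update ω i a) - f ω| ≤ 2 * γ / N := by
    intro ω i a
    have hDd : ∀ x, D x (Function.update ω i a) - D x ω = (γ / N) * (Z x (ω i) - Z x a) := by
      intro x
      have e1 : ∑ j, Z x (Function.update ω i a j)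
          = Z x a + ∑ j ∈ univ.erase i, Z x (ω j) := by
        rw [← add_sum_erase _ _ (mem_univ i)]
        congr 1
        · simp
        · refine sum_congr rfl fun j hj => ?_
          rw [Function.update_of_ne (ne_of_mem_erase hj)]
      have e2 : ∑ j, Z x (ω j) = Z x (ω i) + ∑ j ∈ univ.erase i, Z x (ω j) :=
        (add_sum_erase _ _ (mem_univ i)).symm
      simp only [D]
      rw [e1, e2]; ring
    calc _ = |∑ x, (|D x (Function.update ω i a)| - |D x ω|)| := by
          simp only [f, sum_sub_distrib]
      _ ≤ ∑ x, |(|D x (Function.update ω i a)| - |D x ω|)| := abs_sum_le_sum_abs _ _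
      _ ≤ ∑ x, (γ / N) * (|Z x (ω i)| + |Z x a|) := by
          refine sum_le_sum fun x _ => (abs_abs_sub_abs_le _ _).trans ?_
          rw [hDd, abs_mul, abs_of_pos (by positivity)]
          exact mul_le_mul_of_nonneg_left (abs_sub _ _) (by positivity)
      _ = _ := by rw [← mul_sum, sum_add_distrib, hZs, hZs]; ring
  -- bound on 2ε
  have h2ε : γ / Real.sqrt N * (A + B) ≤ 2 * ε := by
    rw [div_mul_eq_mul_div, div_le_iff₀ hsN]
    refine (sq_le_sq₀ (by positivity) (by positivity)).1 ?_
    rw [mul_pow (2 * ε), hsN2]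
    have := mul_le_mul_of_nonneg_left hNbound (show 0 ≤ (2 * ε) ^ 2 by positivity)
    refine le_trans (le_of_eq ?_) this
    field_simp; ring
  -- Chernoff
  let s : ℝ := B * Real.sqrt N / (4 * γ)
  have hs : 0 < s := by positivity
  have hM := WD.mcd w hw h1 (2 * γ / N) s (by positivity) f hfd
  have hbad : ∑ ω ∈ univ.filter (fun ω => ¬ (1 / 2 * f ω ≤ ε)), WD.W w ω ≤ δ := by
    have step : ∑ ω ∈ univ.filter (fun ω => ¬ (1 / 2 * f ω ≤ ε)), WD.W w ω * Real.exp (B ^ 2 / 4)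
        ≤ WD.E w (fun ω => Real.exp (s * (f ω - WD.E w f))) := by
      refine (sum_le_sum fun ω hω => ?_).trans (sum_le_univ_sum_of_nonneg fun ω =>
        mul_nonneg (WD.W_nonneg w hw ω) (Real.exp_pos _).le)
      refine mul_le_mul_of_nonneg_left (Real.exp_le_exp.2 ?_) (WD.W_nonneg w hw ω)
      have hω' := (mem_filter.1 hω).2
      have : γ / Real.sqrt N * B ≤ f ω - WD.E w f := by
        rw [mul_add] at h2ε; linarith
      refine le_trans (le_of_eq ?_) (mul_le_mul_of_nonneg_left this hs.le)
      simp only [s]; field_simp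
    have e : (N:ℝ) * (s ^ 2 * (2 * γ / N) ^ 2 / 2) = B ^ 2 / 8 := by
      simp only [s]
      rw [div_pow, mul_pow, hsN2]; field_simp; ring
    rw [e] at hM
    rw [← sum_mul] at step
    have h3 := step.trans hM
    have e3 : Real.exp (B ^ 2 / 4) = Real.exp (B ^ 2 / 8) * Real.exp (B ^ 2 / 8) := by
      rw [← Real.exp_add]; congr 1; ring
    have e4 : Real.exp (B ^ 2 / 8) = 2 / δ := by
      rw [hB2, mul_div_cancel_left₀ _ (by norm_num), Real.exp_log (by positivity)]
    rw [e3, e4, ← mul_assoc] at h3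
    have h4 := le_of_mul_le_mul_right (h3.trans_eq (one_mul (2 / δ)).symm) (by positivity)
    rw [← mul_div_assoc, div_le_one hδ0] at h4
    have : 0 ≤ ∑ ω ∈ univ.filter (fun ω => ¬ (1 / 2 * f ω ≤ ε)), WD.W w ω :=
      sum_nonneg fun ω _ => WD.W_nonneg w hw ω
    linarith
  -- measure
  set P := Measure.pi fun _ : Fin N => μ1 with hP
  change _ ≤ P {ω | 1 / 2 * f ω ≤ ε}
  have hPs : ∀ ω, P {ω} = ENNReal.ofReal (WD.W w ω) := by
    intro ω
    rw [← Set.univ_pi_singleton, hP, Measure.pi_pi, WD.W, ENNReal.ofReal_prod_of_nonneg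
      fun _ _ => hw _]
    exact prod_congr rfl fun i _ => hwμ _
  have hPc : P {ω | 1 / 2 * f ω ≤ ε}ᶜ ≤ ENNReal.ofReal δ := by
    have : {ω | 1 / 2 * f ω ≤ ε}ᶜ
        = ⋃ ω ∈ univ.filter (fun ω => ¬ (1 / 2 * f ω ≤ ε)), {ω} := by
      ext ω; simp
    rw [this]
    refine (measure_biUnion_finset_le _ _).trans ?_
    simp only [hPs]
    rw [← ENNReal.ofReal_sum_of_nonneg fun ω _ => WD.W_nonneg w hw ω]
    exact ENNReal.ofReal_le_ofReal hbad
  have htot : 1 ≤ P {ω | 1 / 2 * f ω ≤ ε} + P {ω | 1 / 2 * f ω ≤ ε}ᶜ := by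
    rw [← measure_univ (μ := P), ← Set.union_compl_self {ω | 1 / 2 * f ω ≤ ε}]
    exact measure_union_le _ _
  rw [ENNReal.ofReal_sub _ hδ0.le, ENNReal.ofReal_one]
  exact tsub_le_iff_right.2 (htot.trans (by gcongr))
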